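/- Let n and l be natural numbers with l ≥ 1, and let w : {0,1}^n → ℝ be a function taking strictly positive values. Let M = max_{x ∈ {0,1}^n} w(x), and define the set S(w,l) ⊆ {0,1}^n × {0,1}^l to consist of all pairs (x, y) such that for every i with 1 ≤ i ≤ l, if w(x)/M ≤ 2^(i-1)/2^l then the i-th coordinate y_i of y equals 0. Then the upper bound holds: (M/2^l) · |S(w,l)| ≤ 2·(∑_{x ∈ {0,1}^n} w(x)) + M·2^(n-l). -/

import Mathlib

/-!
Put `c = 2^l * w x / M`. In a string `y` with `(x, y) ∈ S(w,l)` exactly the coordinates `i`, counted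
from `0`, with `2^i < c` are free. If there are `k > 0` of them, the largest is at least `k - 1`, so
there are `2^k = 2 * 2^(k-1) < 2 * c` such `y`; if `k = 0` there is one. Summing the bound
`2 * c + 1` over `x` and multiplying by `M / 2^l` gives the inequality. Nothing changes when bits
are replaced by letters of an arbitrary finite alphabet `β` and `2` by the size of `β`.
-/

theorem exists_mem_card_le_add_one {s : Finset ℕ} (hs : s.Nonempty) : ∃ i ∈ s, s.card ≤ i + 1 := by
  refine ⟨s.max' hs, s.max'_mem hs, ?_⟩
  have hsub : s ⊆ Finset.range (s.max' hs + 1) :=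
    fun i hi ↦ Finset.mem_range_succ_iff.2 (s.le_max' i hi)
  simpa only [Finset.card_range] using Finset.card_le_card hsub

theorem pow_card_le_mul_add_one {R : Type*} [Semiring R] [PartialOrder R] [IsOrderedRing R]
    {b c : R} (hb : 1 ≤ b) (hc : 0 ≤ c) {s : Finset ℕ} (hs : ∀ i ∈ s, b ^ i ≤ c) :
    b ^ s.card ≤ b * c + 1 := by
  have hb₀ : 0 ≤ b := zero_le_one.trans hb
  obtain rfl | hne := s.eq_empty_or_nonempty
  · simpa only [Finset.card_empty, pow_zero] using le_add_of_nonneg_left (mul_nonneg hb₀ hc)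
  · obtain ⟨i, hi, hcard⟩ := exists_mem_card_le_add_one hne
    calc b ^ s.card ≤ b ^ (i + 1) := pow_le_pow_right₀ hb hcard
      _ = b * b ^ i := pow_succ' b i
      _ ≤ b * c := mul_le_mul_of_nonneg_left (hs i hi) hb₀
      _ ≤ b * c + 1 := le_add_of_nonneg_right zero_le_one

theorem card_subtype_forall_imp_eq {ι β : Type*} [Finite ι] (p : ι → Prop) (z : ι → β) :
    Nat.card {y : ι → β // ∀ i, p i → y i = z i} = Nat.card β ^ Nat.card {i // ¬p i} := by
  classical
  have hrestrict (y : ι → β) :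
      (∀ i, p i → y i = z i) ↔ y ∘ ((↑) : {i // p i} → ι) = z ∘ (↑) := by
    simp only [funext_iff, Function.comp_apply, Subtype.forall]
  rw [← Nat.card_fun]
  exact Nat.card_congr ((Equiv.subtypeEquivRight hrestrict).trans (Equiv.subtypePreimage p _))

section LinearOrderedField

variable {K : Type*} [Field K] [LinearOrder K] [IsStrictOrderedRing K] {β : Type*} [Finite β]

theorem card_subtype_forall_le_pow_imp_eq_le (l : ℕ) (z : β) {c : K} (hc : 0 ≤ c) :
    (Nat.card {y : Fin l → β // ∀ i : Fin l, c ≤ (Nat.card β : K) ^ (i : ℕ) → y i = z} : K) ≤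
      Nat.card β * c + 1 := by
  have : Nonempty β := ⟨z⟩
  let free : Finset (Fin l) := {i | ¬c ≤ (Nat.card β : K) ^ (i : ℕ)}
  have hfree : ∀ i ∈ free.map Fin.valEmbedding, (Nat.card β : K) ^ i ≤ c := by
    simp only [free, Finset.forall_mem_map, Finset.mem_filter_univ, Fin.valEmbedding_apply]
    exact fun i hi ↦ (not_le.1 hi).le
  have hβ : (1 : K) ≤ Nat.card β := Nat.one_le_cast.2 Nat.card_pos
  rw [card_subtype_forall_imp_eq _ fun _ ↦ z, Nat.cast_pow,
    Nat.card_eq_fintype_card (α := {i // _}), Fintype.card_subtype]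
  simpa only [Finset.card_map] using pow_card_le_mul_add_one hβ hc hfree

theorem discretization_upper_bound_general {α : Type*} [Fintype α] (l : ℕ) (z : β) {w : α → K}
    (hw : ∀ x, 0 ≤ w x) {M : K} (hM : 0 < M) :
    (M / (Nat.card β : K) ^ l) *
        (Nat.card {p : α × (Fin l → β) // ∀ i : Fin l,
          w p.1 / M ≤ (Nat.card β : K) ^ (i : ℕ) / (Nat.card β : K) ^ l → p.2 i = z} : K) ≤
      Nat.card β * ∑ x, w x + M * (Nat.card α / (Nat.card β : K) ^ l) := by
  have : Nonempty β := ⟨z⟩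
  have hβ : (0 : K) < Nat.card β := Nat.cast_pos.2 Nat.card_pos
  have hfibre (x : α) :
      (Nat.card {y : Fin l → β // ∀ i : Fin l,
        w x / M ≤ (Nat.card β : K) ^ (i : ℕ) / (Nat.card β : K) ^ l → y i = z} : K) ≤
        Nat.card β * (w x / M * (Nat.card β : K) ^ l) + 1 := by
    simp only [le_div_iff₀ (pow_pos hβ l)]
    exact card_subtype_forall_le_pow_imp_eq_le l z
      (mul_nonneg (div_nonneg (hw x) hM.le) (pow_nonneg hβ.le l))
  rw [Nat.card_congr (Equiv.subtypeProdEquivSigmaSubtype fun (x : α) (y : Fin l → β) ↦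
    ∀ i : Fin l, w x / M ≤ (Nat.card β : K) ^ (i : ℕ) / (Nat.card β : K) ^ l → y i = z),
    Nat.card_sigma, Nat.cast_sum]
  calc
    _ ≤ M / (Nat.card β : K) ^ l *
          ∑ x, (Nat.card β * (w x / M * (Nat.card β : K) ^ l) + 1) := by
      gcongr with x
      exact hfibre x
    _ = M / (Nat.card β : K) ^ l *
          (Nat.card β * ((∑ x, w x) / M * (Nat.card β : K) ^ l) + Nat.card α) := by
      simp only [Finset.sum_add_distrib, ← Finset.mul_sum, ← Finset.sum_mul, ← Finset.sum_div,
        Finset.sum_const, Finset.card_univ, nsmul_one, Nat.card_eq_fintype_card]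
    _ = Nat.card β * ∑ x, w x + M * (Nat.card α / (Nat.card β : K) ^ l) := by
      field_simp

end LinearOrderedField

/-- Discretization lemma, upper-bound direction:
`(M/2^l) * |S(w,l)| ≤ 2 * ∑ x, w x + M * 2^(n-l)`. -/
theorem discretization_upper_bound (n l : ℕ) (hl : 1 ≤ l)
    (w : (Fin n → Bool) → ℝ) (hw : ∀ x, 0 < w x)
    (M : ℝ) (hM : IsGreatest (Set.range w) M) :
    (M / 2 ^ l) *
        (Nat.card {p : (Fin n → Bool) × (Fin l → Bool) //
          ∀ i : Fin l, w p.1 / M ≤ 2 ^ (i : ℕ) / 2 ^ l → p.2 i = false} : ℝ) ≤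
      2 * (∑ x : Fin n → Bool, w x) + M * (2 : ℝ) ^ ((n : ℤ) - (l : ℤ)) := by
  obtain ⟨x₀, rfl⟩ := hM.1
  simpa [zpow_sub₀] using discretization_upper_bound_general l false (fun x ↦ (hw x).le) (hw x₀)
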